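/- Let r_0, r_1, …, r_k be rows (in that order) with supp(r_i) ⊆ supp(r_0) for all 1 ≤ i ≤ k, such that every consecutive pair (r_0, r_1), (r_1, r_2), …, (r_{k−1}, r_k) satisfies the alternating sign condition. Perform k successive Case 1 row exchanges moving r_0 down past r_1, then r_2, …, then r_k; denote the final image of r_0 by r_0^{(k)} and the images of r_i (i ≥ 1) by r'_i. Then l(r_0^{(k)}) = l(r_0) − Σ_{i=1}^k C(r_i) and η(r_0^{(k)}) = (−1)^{Σ_{i=1}^k C(r_i)} η(r_0); for each 1 ≤ i ≤ k, l(r'_i) = l(r_i) and η(r'_i) = (−1)^{C(r_0)+1} η(r_i). Moreover, in the resulting order (r'_1, …, r'_k, r_0^{(k)}), every consecutive pair satisfies the alternating sign condition except the final pair (r'_k, r_0^{(k)}), which fails it. -/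

import Mathlib

/-- A row `r = (A, B, l, η)`: the data of an extended segment `([A, B], l, η)`
(with the constraints `B ≤ A` and `η ∈ {1, -1}` imposed as hypotheses via
`IsRow`). Its support is the integer interval `[B, A]`. -/
structure Row where
  A : ℤ
  B : ℤ
  l : ℤ
  eta : ℤ
deriving DecidableEq

instance : Inhabited Row := ⟨⟨0, 0, 0, 1⟩⟩

/-- `(-1)^n` for an integer `n` (only the parity of `n` matters). -/
def epow (n : ℤ) : ℤ := (-1) ^ n.natAbs

/-- `b(r) = A - B + 1`, the length of the support of `r`. -/
def Row.b (r : Row) : ℤ := r.A - r.B + 1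

/-- `C(r) = b(r) - 2l(r)`, the number of circles of `r`. -/
def Row.C (r : Row) : ℤ := r.b - 2 * r.l

/-- The defining constraints on a row: `B ≤ A` and `η ∈ {1, -1}`. -/
def IsRow (r : Row) : Prop := r.B ≤ r.A ∧ (r.eta = 1 ∨ r.eta = -1)

/-- The ordered pair of consecutive rows `(r₁, r₂)` satisfies the alternating
sign condition: `η(r₂) = (-1)^{C(r₁)} η(r₁)`. -/
def Alt (r₁ r₂ : Row) : Prop := r₂.eta = epow r₁.C * r₁.eta

/-- Case 1 row exchange of the consecutive pair `(r₁, r₂)` (for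
`supp(r₂) ⊆ supp(r₁)`); the result `(r₂', r₁')` is in the opposite order. -/
def exchange1 (r₁ r₂ : Row) : Row × Row :=
  let ε : ℤ := epow (r₁.A - r₁.B) * r₁.eta * r₂.eta
  let c₂ : ℤ := r₂.b - 2 * r₂.l
  let s₂ : Row := ⟨r₂.A, r₂.B, r₂.l, epow (r₁.A - r₁.B) * r₂.eta⟩
  let s₁ : Row :=
    if ε = 1 ∧ r₁.b - 2 * r₁.l < 2 * c₂ then
      ⟨r₁.A, r₁.B, r₁.b - (r₁.l + c₂), epow (r₂.A - r₂.B) * r₁.eta⟩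
    else if ε = 1 then
      ⟨r₁.A, r₁.B, r₁.l + c₂, epow (r₂.A - r₂.B + 1) * r₁.eta⟩
    else
      ⟨r₁.A, r₁.B, r₁.l - c₂, epow (r₂.A - r₂.B + 1) * r₁.eta⟩
  (s₂, s₁)

/-- Case 2 row exchange of the consecutive pair `(r₁, r₂)` (for
`supp(r₁) ⊆ supp(r₂)`); the result `(r₂', r₁')` is in the opposite order. -/
def exchange2 (r₁ r₂ : Row) : Row × Row :=
  let ε : ℤ := epow (r₁.A - r₁.B) * r₁.eta * r₂.eta
  let c₁ : ℤ := r₁.b - 2 * r₁.l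
  let s₁ : Row := ⟨r₁.A, r₁.B, r₁.l, epow (r₂.A - r₂.B) * r₁.eta⟩
  let s₂ : Row :=
    if ε = 1 ∧ r₂.b - 2 * r₂.l < 2 * c₁ then
      ⟨r₂.A, r₂.B, r₂.b - (r₂.l + c₁), epow (r₁.A - r₁.B) * r₂.eta⟩
    else if ε = 1 then
      ⟨r₂.A, r₂.B, r₂.l + c₁, epow (r₁.A - r₁.B + 1) * r₂.eta⟩
    else
      ⟨r₂.A, r₂.B, r₂.l - c₁, epow (r₁.A - r₁.B + 1) * r₂.eta⟩
  (s₂, s₁)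

/-- Move `r₀` down past the list `rs` by successive Case 1 row exchanges;
returns the final image of `r₀` together with the list of images of the rows
of `rs`. -/
def exchangeDown : Row → List Row → Row × List Row
  | r₀, [] => (r₀, [])
  | r₀, r :: rs =>
    let p := exchange1 r₀ r
    let q := exchangeDown p.2 rs
    (q.1, p.1 :: q.2)

/-!
Under the alternating sign condition the sign `ε` of an exchange equals `-η(r₀) ^ 2 ≠ 1`, so only
the last branch of the Case 1 exchange ever occurs: `r₀` absorbs the `C(r)` circles of the row `r`
it passes, and `η(r)` is multiplied by `(-1) ^ (C(r₀) + 1)`. Absorption preserves the parity of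
`C(r₀)`, and it makes `r₀` alternate with the row that follows `r`, so the move can be iterated.
Along an alternating chain the signs telescope, which determines `η(r_k)` in terms of `η(r₀)` and
shows that the final pair has the wrong relative sign.
-/

theorem epow_eq_negOnePow (n : ℤ) : epow n = n.negOnePow := by
  rw [epow, ← Int.coe_negOnePow_natCast, Int.natCast_natAbs, Int.negOnePow_abs]

theorem epow_zero : epow 0 = 1 := rfl

theorem epow_add (m n : ℤ) : epow (m + n) = epow m * epow n := by
  simp only [epow_eq_negOnePow, Int.negOnePow_add, Units.val_mul]

theorem epow_add_one (n : ℤ) : epow (n + 1) = -epow n := by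
  simp only [epow_eq_negOnePow, Int.negOnePow_succ, Units.val_neg]

theorem epow_mul_self (n : ℤ) : epow n * epow n = 1 := by
  rw [epow_eq_negOnePow, Int.isUnit_mul_self (Units.isUnit _)]

theorem epow_ne_zero (n : ℤ) : epow n ≠ 0 :=
  left_ne_zero_of_mul_eq_one (epow_mul_self n)

theorem epow_add_two_mul (m n : ℤ) : epow (m + 2 * n) = epow m := by
  rw [two_mul, epow_add, epow_add, epow_mul_self, mul_one]

namespace Row

/-- The row `r` with its sign `η` multiplied by `u`: the effect of an exchange on the row that
moves up. -/
def twist (u : ℤ) (r : Row) : Row := { r with eta := u * r.eta }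

/-- The row `r` after absorbing `c` circles, `(A, B, l - c, (-1) ^ c η)`: the effect on the row that
moves down of exchanging it with a row having `c` circles. -/
def absorb (r : Row) (c : ℤ) : Row := { r with l := r.l - c, eta := epow c * r.eta }

theorem absorb_zero (r : Row) : r.absorb 0 = r := by
  simp only [absorb, sub_zero, epow_zero, one_mul]

theorem absorb_absorb (r : Row) (c d : ℤ) : (r.absorb c).absorb d = r.absorb (c + d) := by
  simp only [absorb, epow_add, mk.injEq, true_and]
  constructor <;> ring

theorem C_absorb (r : Row) (c : ℤ) : (r.absorb c).C = r.C + 2 * c := by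
  simp only [absorb, C, b]
  ring

theorem epow_C_add_one (r : Row) : epow (r.C + 1) = epow (r.A - r.B) := by
  have h : r.C + 1 = r.A - r.B + 2 * (1 - r.l) := by
    simp only [C, b]
    ring
  rw [h, epow_add_two_mul]

theorem epow_C_absorb_add_one (r : Row) (c : ℤ) :
    epow ((r.absorb c).C + 1) = epow (r.C + 1) := by
  rw [C_absorb, add_right_comm, epow_add_two_mul]

end Row

namespace Alt

variable {r s t : Row}

theorem twist (h : Alt r s) (u : ℤ) : Alt (r.twist u) (s.twist u) := by
  calc u * s.eta = u * (epow r.C * r.eta) := congrArg (u * ·) h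
    _ = epow r.C * (u * r.eta) := mul_left_comm _ _ _

theorem absorb (hrs : Alt r s) (hst : Alt s t) : Alt (r.absorb s.C) t := by
  unfold Alt at hrs hst ⊢
  calc t.eta = epow r.C * (epow s.C * r.eta) := by rw [hst, hrs]; ring
    _ = epow (r.absorb s.C).C * (r.absorb s.C).eta := by
      rw [Row.C_absorb, epow_add_two_mul]
      rfl

theorem exchange_sign_eq (h : Alt r s) : epow (r.A - r.B) * r.eta * s.eta = -r.eta ^ 2 := by
  unfold Alt at h
  rw [h, ← Row.epow_C_add_one, epow_add_one]
  linear_combination -r.eta ^ 2 * epow_mul_self r.C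

theorem exchange1_eq (h : Alt r s) :
    exchange1 r s = (s.twist (epow (r.C + 1)), r.absorb s.C) := by
  have sign_ne_one : epow (r.A - r.B) * r.eta * s.eta ≠ 1 := by
    rw [h.exchange_sign_eq]
    linarith [sq_nonneg r.eta]
  have epow_C : epow (s.A - s.B + 1) = epow s.C := by
    rw [epow_add_one, ← Row.epow_C_add_one, epow_add_one, neg_neg]
  simp only [exchange1, sign_ne_one, false_and, if_false, epow_C, Row.epow_C_add_one]
  rfl

end Alt

theorem exchangeDown_eq_of_isChain {r : Row} {rs : List Row} (h : List.IsChain Alt (r :: rs)) :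
    exchangeDown r rs =
      (r.absorb (rs.map Row.C).sum, rs.map (Row.twist (epow (r.C + 1)))) := by
  induction rs generalizing r with
  | nil => simp only [exchangeDown, List.map_nil, List.sum_nil, Row.absorb_zero]
  | cons s rs ih =>
    obtain ⟨hrs, hchain⟩ := List.isChain_cons_cons.mp h
    have hchain' : List.IsChain Alt (r.absorb s.C :: rs) :=
      hchain.cons_of_imp fun _ hst => hrs.absorb hst
    simp only [exchangeDown, hrs.exchange1_eq, ih hchain', Row.absorb_absorb,
      Row.epow_C_absorb_add_one, List.map_cons, List.sum_cons]

theorem epow_C_mul_eta_getLast_of_isChain {r : Row} {rs : List Row}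
    (h : List.IsChain Alt (r :: rs)) :
    epow ((r :: rs).getLast (List.cons_ne_nil r rs)).C *
        ((r :: rs).getLast (List.cons_ne_nil r rs)).eta =
      epow (r.C + (rs.map Row.C).sum) * r.eta := by
  induction rs generalizing r with
  | nil => simp only [List.getLast_singleton, List.map_nil, List.sum_nil, add_zero]
  | cons s rs ih =>
    obtain ⟨hrs, hchain⟩ := List.isChain_cons_cons.mp h
    unfold Alt at hrs
    rw [List.getLast_cons_cons, ih hchain, hrs, List.map_cons, List.sum_cons, epow_add r.C]
    ring

theorem not_alt_twist_getLast_absorb {r : Row} {rs : List Row} (hη : r.eta ≠ 0)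
    (h : List.IsChain Alt (r :: rs)) (hne : rs ≠ []) :
    ¬ Alt ((rs.getLast hne).twist (epow (r.C + 1))) (r.absorb (rs.map Row.C).sum) := by
  set S := (rs.map Row.C).sum
  have last_eta : epow (rs.getLast hne).C * (rs.getLast hne).eta = epow (r.C + S) * r.eta := by
    rw [← epow_C_mul_eta_getLast_of_isChain h, List.getLast_cons hne]
  have twisted_eta :
      epow (rs.getLast hne).C * (epow (r.C + 1) * (rs.getLast hne).eta) = -(epow S * r.eta) := by
    rw [mul_left_comm, last_eta, epow_add_one, epow_add]
    linear_combination -(epow S * r.eta) * epow_mul_self r.C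
  intro halt
  have eq_neg_self : epow S * r.eta = -(epow S * r.eta) := Eq.trans halt twisted_eta
  exact mul_ne_zero (epow_ne_zero S) hη (self_eq_neg.mp eq_neg_self)

/-- Big swap down (Lemma `big swap down`): moving `r₀` down past consecutive
rows `r₁, …, r_k` (all with support contained in that of `r₀`) which form an
alternating chain `(r₀, r₁, …, r_k)`. -/
theorem big_swap_down (r₀ : Row) (rs : List Row)
    (h₀ : IsRow r₀) (hrs : ∀ r ∈ rs, IsRow r)
    (hsupp : ∀ r ∈ rs, r₀.B ≤ r.B ∧ r.A ≤ r₀.A)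
    (hchain : List.Chain Alt r₀ rs) :
    let q := exchangeDown r₀ rs
    q.1.l = r₀.l - (rs.map Row.C).sum ∧
    q.1.eta = epow ((rs.map Row.C).sum) * r₀.eta ∧
    q.2.length = rs.length ∧
    (∀ i : ℕ, i < rs.length →
      (q.2.getD i default).l = (rs.getD i default).l ∧
      (q.2.getD i default).eta = epow (r₀.C + 1) * (rs.getD i default).eta) ∧
    List.Chain' Alt q.2 ∧
    (∀ h : q.2 ≠ [], ¬ Alt (q.2.getLast h) q.1) := by
  have hη : r₀.eta ≠ 0 := by rcases h₀.2 with h | h <;> simp [h]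
  rw [exchangeDown_eq_of_isChain hchain]
  refine ⟨rfl, rfl, List.length_map _, fun i hi => ?_, ?_, fun hne => ?_⟩
  · simp [List.getD_eq_getElem?_getD, hi, Row.twist]
  · exact List.isChain_map_of_isChain _ (fun _ _ h => h.twist _) hchain.tail
  · rw [List.getLast_map]
    exact not_alt_twist_getLast_absorb hη hchain _
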